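/- Fix α_un > 0 and δ ∈ (0,1). Suppose there exists an optimal occupancy d*_0 with d*_0/d^D ≤ B_{w,0} pointwise, and assumptions (A1), (A4), (A5), (A6) hold for α = α_un, and Inexact-PRO-RL satisfies the optimization-error conditions with errors ε_{o,v}, ε_{o,w}. Then with probability at least 1−δ the output π̂ of Inexact-PRO-RL with input α = α_un satisfies J(π*_0) − J(π̂) ≤ (4/(1−γ))·√(ε_stat(α_un)/(α_un·M_f)) + ε_un, where ε_un = α_un·B_{f,0} + (2/(1−γ))·√(2(ε_opt + ε_{α_un,app})/(α_un·M_f)), ε_opt = ε_{o,v} + ε_{o,w}, and ε_{α_un,app} = (B_{w,α_un}+1)·ε_{α_un,r,v} + (B_{e,α_un} + α_un·B_{f',α_un})·ε_{α_un,r,w}. -/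

import Mathlib

open MeasureTheory
open scoped BigOperators ENNReal

namespace ProRL

/-- The discrete measure on a type induced by a real-valued weight function. -/
noncomputable def discMeasure {X : Type*} [MeasurableSpace X] (p : X → ℝ) : Measure X :=
  Measure.sum fun x => ENNReal.ofReal (p x) • Measure.dirac x

variable {S A : Type*} [Fintype S] [Fintype A]

/-- The `t`-step state-action distribution of policy `π` started from `μ0`. -/
noncomputable def saDist (P : S → A → S → ℝ) (μ0 : S → ℝ) (π : S → A → ℝ) :
    ℕ → S → A → ℝ
  | 0 => fun s a => μ0 s * π s a
  | t + 1 => fun s a =>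
      (∑ s' : S, ∑ a' : A, saDist P μ0 π t s' a' * P s' a' s) * π s a

/-- The discounted state-action occupancy `d^π(s,a)`. -/
noncomputable def occ (P : S → A → S → ℝ) (μ0 : S → ℝ) (γ : ℝ) (π : S → A → ℝ)
    (s : S) (a : A) : ℝ :=
  (1 - γ) * ∑' t : ℕ, γ ^ t * saDist P μ0 π t s a

/-- The (normalized) expected discounted return `J(π) = E_{d^π}[r]`. -/
noncomputable def Jret (P : S → A → S → ℝ) (r : S → A → ℝ) (μ0 : S → ℝ) (γ : ℝ)
    (π : S → A → ℝ) : ℝ :=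
  ∑ s : S, ∑ a : A, occ P μ0 γ π s a * r s a

/-- `π` is a (stationary, stochastic) policy. -/
def IsPolicy (π : S → A → ℝ) : Prop :=
  (∀ s a, 0 ≤ π s a) ∧ ∀ s, ∑ a : A, π s a = 1

/-- The Bellman residual `e_v(s,a) = r(s,a) + γ ∑_{s'} P(s'|s,a) v(s') − v(s)`. -/
noncomputable def eV (P : S → A → S → ℝ) (r : S → A → ℝ) (γ : ℝ) (v : S → ℝ)
    (s : S) (a : A) : ℝ :=
  r s a + γ * ∑ s' : S, P s a s' * v s' - v s

/-- The population Lagrangian `L_α(v,w)`. -/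
noncomputable def Lag (P : S → A → S → ℝ) (r : S → A → ℝ) (μ0 : S → ℝ) (γ : ℝ)
    (dD : S → A → ℝ) (f : ℝ → ℝ) (α : ℝ) (v : S → ℝ) (w : S → A → ℝ) : ℝ :=
  (1 - γ) * ∑ s : S, μ0 s * v s
    - α * ∑ s : S, ∑ a : A, dD s a * f (w s a)
    + ∑ s : S, ∑ a : A, dD s a * (w s a * eV P r γ v s a)

/-- The empirical Lagrangian `L̂_α(v,w)` built from the transition dataset `D`
(`D i = ((sᵢ,aᵢ), s'ᵢ)`, with `rᵢ = r sᵢ aᵢ`) and initial-state dataset `D0`. -/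
noncomputable def empLag (r : S → A → ℝ) (γ : ℝ) (f : ℝ → ℝ) (α : ℝ) {n n0 : ℕ}
    (D : Fin n → (S × A) × S) (D0 : Fin n0 → S) (v : S → ℝ) (w : S → A → ℝ) : ℝ :=
  (1 - γ) * ((n0 : ℝ)⁻¹ * ∑ j : Fin n0, v (D0 j))
    - α * ((n : ℝ)⁻¹ * ∑ i : Fin n, f (w (D i).1.1 (D i).1.2))
    + (n : ℝ)⁻¹ * ∑ i : Fin n,
        w (D i).1.1 (D i).1.2 *
          (r (D i).1.1 (D i).1.2 + γ * v (D i).2 - v (D i).1.1)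

/-- Per-state normalization of a state-action weight into a policy
(uniform where the state marginal is not positive). -/
noncomputable def normPolicy (d : S → A → ℝ) (s : S) (a : A) : ℝ :=
  if 0 < ∑ a' : A, d s a' then d s a / ∑ a' : A, d s a'
  else (Fintype.card A : ℝ)⁻¹

/-- Policy extraction from a density ratio `w` and a behavior policy `piD`
(uniform where the normalizer vanishes). -/
noncomputable def extractPolicy (piD w : S → A → ℝ) (s : S) (a : A) : ℝ :=
  if 0 < ∑ a' : A, w s a' * piD s a' then
    w s a * piD s a / ∑ a' : A, w s a' * piD s a'
  else (Fintype.card A : ℝ)⁻¹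

/-- Behavior policy `π_D(a|s)` obtained from the data distribution `d^D`. -/
noncomputable def behPolicy (dD : S → A → ℝ) : S → A → ℝ := normPolicy dD

/-- The state-action measure `d(s,a) = w(s,a)·d^D(s,a)`. -/
noncomputable def dstar (dD w : S → A → ℝ) : S → A → ℝ := fun s a => w s a * dD s a

/-- The weighted `L²(d^D)` norm of a state-action function. -/
noncomputable def l2nrm (dD g : S → A → ℝ) : ℝ :=
  Real.sqrt (∑ s : S, ∑ a : A, dD s a * g s a ^ 2)

/-- `‖π(·|s) − π'(·|s)‖₁`. -/
noncomputable def l1Pol (π π' : S → A → ℝ) (s : S) : ℝ := ∑ a : A, |π s a - π' s a|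

/-- `E_{s ∼ d}[‖π(·|s) − π'(·|s)‖₁]` where `d` is a state-action distribution. -/
noncomputable def expL1 (d π π' : S → A → ℝ) : ℝ :=
  ∑ s : S, (∑ a : A, d s a) * l1Pol π π' s

/-- The statistical error term `ε_stat`. -/
noncomputable def epsStat (γ α Bv Bf Bw Be δ : ℝ) (nV nW n n0 : ℕ) : ℝ :=
  (1 - γ) * Bv * Real.sqrt (2 * Real.log (4 * (nV : ℝ) / δ) / (n0 : ℝ))
    + (α * Bf + Bw * Be) *
        Real.sqrt (2 * Real.log (4 * ((nV : ℝ) * (nW : ℝ)) / δ) / (n : ℝ))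

/-- The Bellman flow equations for a state-action measure `d`. -/
def BellmanFlow (P : S → A → S → ℝ) (μ0 : S → ℝ) (γ : ℝ) (d : S → A → ℝ) : Prop :=
  ∀ s : S, ∑ a : A, d s a
    = (1 - γ) * μ0 s + γ * ∑ s' : S, ∑ a' : A, P s' a' s * d s' a'

/-- `(v,w)` is a saddle point of `max_{w ≥ 0} min_v L_α(v,w)`. -/
def IsSaddle (P : S → A → S → ℝ) (r : S → A → ℝ) (μ0 : S → ℝ) (γ : ℝ)
    (dD : S → A → ℝ) (f : ℝ → ℝ) (α : ℝ) (v : S → ℝ) (w : S → A → ℝ) : Prop :=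
  (∀ s a, 0 ≤ w s a) ∧
  (∀ v' : S → ℝ, Lag P r μ0 γ dD f α v w ≤ Lag P r μ0 γ dD f α v' w) ∧
  (∀ w' : S → A → ℝ, (∀ s a, 0 ≤ w' s a) →
    Lag P r μ0 γ dD f α v w' ≤ Lag P r μ0 γ dD f α v w)

/-- `(v,w)` is a saddle point of `max_{0 ≤ w ≤ Bw} min_v L_α(v,w)` (constrained LP). -/
def IsSaddleB (P : S → A → S → ℝ) (r : S → A → ℝ) (μ0 : S → ℝ) (γ : ℝ)
    (dD : S → A → ℝ) (f : ℝ → ℝ) (α Bw : ℝ) (v : S → ℝ) (w : S → A → ℝ) : Prop :=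
  (∀ s a, 0 ≤ w s a ∧ w s a ≤ Bw) ∧
  (∀ v' : S → ℝ, Lag P r μ0 γ dD f α v w ≤ Lag P r μ0 γ dD f α v' w) ∧
  (∀ w' : S → A → ℝ, (∀ s a, 0 ≤ w' s a ∧ w' s a ≤ Bw) →
    Lag P r μ0 γ dD f α v w' ≤ Lag P r μ0 γ dD f α v w)

/-- `(vhat, what)` is an exact max-min point of the empirical Lagrangian over `V × W`:
`vhat ∈ argmin_{v ∈ V} L̂(v, what)` and `what ∈ argmax_{w ∈ W} min_{v ∈ V} L̂(v, w)`. -/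
def IsProRLOutput (r : S → A → ℝ) (γ : ℝ) (f : ℝ → ℝ) (α : ℝ)
    (V : Finset (S → ℝ)) (W : Finset (S → A → ℝ)) {n n0 : ℕ}
    (D : Fin n → (S × A) × S) (D0 : Fin n0 → S)
    (vhat : S → ℝ) (what : S → A → ℝ) : Prop :=
  vhat ∈ V ∧ what ∈ W ∧
  (∀ v ∈ V, empLag r γ f α D D0 vhat what ≤ empLag r γ f α D D0 v what) ∧
  ∀ w ∈ W, ∀ vw ∈ V,
    (∀ v ∈ V, empLag r γ f α D D0 vw w ≤ empLag r γ f α D D0 v w) →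
      empLag r γ f α D D0 vw w ≤ empLag r γ f α D D0 vhat what

/-- Weight of a transition tuple `((s,a),s')` under `(s,a) ∼ d^D`, `s' ∼ P(·|s,a)`. -/
noncomputable def tupleWeight (P : S → A → S → ℝ) (dD : S → A → ℝ)
    (x : (S × A) × S) : ℝ :=
  dD x.1.1 x.1.2 * P x.1.1 x.1.2 x.2

/-- The joint law of the transition dataset `D` (i.i.d. from `d^D ⊗ P`) and the
initial-state dataset `D0` (i.i.d. from `μ0`). -/
noncomputable def dataMeasure [MeasurableSpace S] [MeasurableSpace A]
    (P : S → A → S → ℝ) (dD : S → A → ℝ) (μ0 : S → ℝ) (n n0 : ℕ) :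
    Measure ((Fin n → (S × A) × S) × (Fin n0 → S)) :=
  (Measure.pi fun _ : Fin n => discMeasure (tupleWeight P dD)).prod
    (Measure.pi fun _ : Fin n0 => discMeasure μ0)

/-- The joint law of datasets `D1`, `D2` (both i.i.d. from `d^D ⊗ P`) and `D0`
(i.i.d. from `μ0`), used by PRO-RL-BC. -/
noncomputable def dataMeasure3 [MeasurableSpace S] [MeasurableSpace A]
    (P : S → A → S → ℝ) (dD : S → A → ℝ) (μ0 : S → ℝ) (n1 n2 n0 : ℕ) :
    Measure ((Fin n1 → (S × A) × S) × (Fin n2 → (S × A) × S) × (Fin n0 → S)) :=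
  (Measure.pi fun _ : Fin n1 => discMeasure (tupleWeight P dD)).prod
    ((Measure.pi fun _ : Fin n2 => discMeasure (tupleWeight P dD)).prod
      (Measure.pi fun _ : Fin n0 => discMeasure μ0))

/-- `v` is the optimal value function: it satisfies the Bellman optimality equation. -/
def IsOptValue [Nonempty A] (P : S → A → S → ℝ) (r : S → A → ℝ) (γ : ℝ)
    (v : S → ℝ) : Prop :=
  ∀ s : S, v s = Finset.univ.sup' Finset.univ_nonempty
    (fun a : A => r s a + γ * ∑ s' : S, P s a s' * v s')

/-- Basic assumptions on the MDP, the regularizer-free data, and the data distribution. -/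
structure MDPAssumptions (P : S → A → S → ℝ) (r : S → A → ℝ) (μ0 : S → ℝ) (γ : ℝ)
    (dD : S → A → ℝ) : Prop where
  P_nonneg : ∀ s a s', 0 ≤ P s a s'
  P_sum : ∀ s a, ∑ s' : S, P s a s' = 1
  r_nonneg : ∀ s a, 0 ≤ r s a
  r_le_one : ∀ s a, r s a ≤ 1
  γ_nonneg : 0 ≤ γ
  γ_lt_one : γ < 1
  μ0_pos : ∀ s, 0 < μ0 s
  μ0_sum : ∑ s : S, μ0 s = 1
  dD_nonneg : ∀ s a, 0 ≤ dD s a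
  dD_sum : ∑ s : S, ∑ a : A, dD s a = 1

/-- Regularity of the regularizer `f`: continuously differentiable with derivative `f'`,
`M_f`-strongly convex, and with `|f'| ≤ Bf'`, `|f| ≤ Bf` on `[0, Bw]`. -/
structure RegAssumptions (f f' : ℝ → ℝ) (Mf Bw Bf' Bf : ℝ) : Prop where
  deriv : ∀ x, HasDerivAt f (f' x) x
  strong : StrongConvexOn Set.univ Mf f
  Mf_pos : 0 < Mf
  f'_bdd : ∀ x, 0 ≤ x → x ≤ Bw → |f' x| ≤ Bf'
  f_bdd : ∀ x, 0 ≤ x → x ≤ Bw → |f x| ≤ Bf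

/-- `w` is an optimal density ratio of the unregularized LP (the set `W*₀`). -/
def OptRatio (P : S → A → S → ℝ) (r : S → A → ℝ) (μ0 : S → ℝ) (γ : ℝ)
    (dD : S → A → ℝ) (w : S → A → ℝ) : Prop :=
  (∀ s a, 0 ≤ w s a) ∧ BellmanFlow P μ0 γ (dstar dD w) ∧
  ∀ w' : S → A → ℝ, (∀ s a, 0 ≤ w' s a) → BellmanFlow P μ0 γ (dstar dD w') →
    ∑ s : S, ∑ a : A, dstar dD w' s a * r s a
      ≤ ∑ s : S, ∑ a : A, dstar dD w s a * r s a

section Concentration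

variable {X : Type*} [Fintype X] [MeasurableSpace X]

lemma isProbabilityMeasure_discMeasure {p : X → ℝ} (hp : ∀ x, 0 ≤ p x)
    (hsum : ∑ x, p x = 1) : IsProbabilityMeasure (discMeasure p) := by
  constructor
  simp only [discMeasure, Measure.sum_fintype, Measure.finsetSum_apply, Measure.smul_apply,
    measure_univ, smul_eq_mul, mul_one]
  rw [← ENNReal.ofReal_sum_of_nonneg fun x _ => hp x, hsum, ENNReal.ofReal_one]

variable [MeasurableSingletonClass X]

lemma integral_discMeasure {p : X → ℝ} (hp : ∀ x, 0 ≤ p x) (hsum : ∑ x, p x = 1)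
    (g : X → ℝ) : ∫ x, g x ∂(discMeasure p) = ∑ x, p x * g x := by
  have := isProbabilityMeasure_discMeasure hp hsum
  rw [integral_fintype (.of_finite)]
  refine Finset.sum_congr rfl fun x _ => ?_
  rw [smul_eq_mul]
  congr 1
  simp only [discMeasure, Measure.sum_fintype, measureReal_def, Measure.finsetSum_apply,
    Measure.smul_apply, smul_eq_mul]
  rw [Finset.sum_eq_single x]
  · simp [hp x]
  · intro y _ hy
    simp [hy]
  · simp

/-- One-sided Hoeffding inequality for the empirical mean of a bounded function. -/
lemma measure_empMean_upper {p : X → ℝ} (hp : ∀ x, 0 ≤ p x) (hsum : ∑ x, p x = 1)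
    {g : X → ℝ} {a : ℝ} (ha : 0 < a) (hg : ∀ x, |g x| ≤ a) {n : ℕ} (hn : 0 < n)
    {ℓ : ℝ} (hℓ : 0 ≤ ℓ) :
    (Measure.pi fun _ : Fin n => discMeasure p)
        {D | a * √(2 * ℓ / n) < (n : ℝ)⁻¹ * ∑ i, g (D i) - ∑ x, p x * g x}
      ≤ ENNReal.ofReal (Real.exp (-ℓ)) := by
  have := isProbabilityMeasure_discMeasure hp hsum
  have hn' : (0 : ℝ) < n := by exact_mod_cast hn
  set m := ∑ x, p x * g x with hm
  have hsub : ProbabilityTheory.HasSubgaussianMGF (fun x => g x - m)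
      ((‖a - -a‖₊ / 2) ^ 2) (discMeasure p) := by
    have h := ProbabilityTheory.hasSubgaussianMGF_of_mem_Icc (μ := discMeasure p) (X := g)
      (a := -a) (b := a) (measurable_of_finite _).aemeasurable
      (Filter.Eventually.of_forall fun x => abs_le.mp (hg x))
    rwa [integral_discMeasure hp hsum] at h
  have hind : ProbabilityTheory.iIndepFun (fun (i : Fin n) (D : Fin n → X) => g (D i) - m)
      (Measure.pi fun _ : Fin n => discMeasure p) :=
    ProbabilityTheory.iIndepFun_pi (X := fun (_ : Fin n) x => g x - m)
      fun _ => (measurable_of_finite _).aemeasurable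
  have hsubi : ∀ i ∈ (Finset.univ : Finset (Fin n)),
      ProbabilityTheory.HasSubgaussianMGF (fun D : Fin n → X => g (D i) - m)
        ((‖a - -a‖₊ / 2) ^ 2) (Measure.pi fun _ : Fin n => discMeasure p) := by
    intro i _
    have hmap := (measurePreserving_eval (fun _ : Fin n => discMeasure p) i).map_eq
    exact ProbabilityTheory.HasSubgaussianMGF.of_map (Y := Function.eval i)
      (measurable_pi_apply i).aemeasurable (by rw [hmap]; exact hsub)
  have key := ProbabilityTheory.HasSubgaussianMGF.measure_sum_ge_le_of_iIndepFun hind hsubi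
    (ε := n * (a * √(2 * ℓ / n))) (by positivity)
  have hexp : -(n * (a * √(2 * ℓ / n))) ^ 2 /
      (2 * ((∑ _i : Fin n, ((‖a - -a‖₊ / 2) ^ 2) : NNReal) : ℝ)) = -ℓ := by
    have h1 : ((‖a - -a‖₊ : NNReal) : ℝ) = 2 * a := by
      rw [coe_nnnorm, Real.norm_of_nonneg (by linarith)]; ring
    simp only [Finset.sum_const, Finset.card_univ, Fintype.card_fin, nsmul_eq_mul,
      NNReal.coe_mul, NNReal.coe_natCast, NNReal.coe_pow, NNReal.coe_div, NNReal.coe_ofNat, h1]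
    rw [mul_pow, mul_pow, Real.sq_sqrt (by positivity)]
    field_simp
  rw [hexp] at key
  refine (measure_mono ?_).trans
    (ENNReal.le_ofReal_iff_toReal_le (measure_ne_top _ _) (Real.exp_pos _).le |>.mpr key)
  intro D hD
  simp only [Set.mem_ofPred_eq] at hD ⊢
  rw [Finset.sum_sub_distrib, Finset.sum_const, Finset.card_univ, Fintype.card_fin, nsmul_eq_mul]
  calc (n : ℝ) * (a * √(2 * ℓ / n)) ≤ n * ((n : ℝ)⁻¹ * ∑ i, g (D i) - m) := by gcongr
    _ = _ := by field_simp

/-- Two-sided Hoeffding inequality for the empirical mean of a bounded function. -/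
lemma measure_empMean_dev {p : X → ℝ} (hp : ∀ x, 0 ≤ p x) (hsum : ∑ x, p x = 1)
    {g : X → ℝ} {a : ℝ} (hg : ∀ x, |g x| ≤ a) {n : ℕ} (hn : 0 < n)
    {ℓ : ℝ} (hℓ : 0 ≤ ℓ) :
    (Measure.pi fun _ : Fin n => discMeasure p)
        {D | a * √(2 * ℓ / n) < |(n : ℝ)⁻¹ * ∑ i, g (D i) - ∑ x, p x * g x|}
      ≤ ENNReal.ofReal (2 * Real.exp (-ℓ)) := by
  obtain ha | ha := lt_or_ge 0 a
  · have hupper := measure_empMean_upper hp hsum ha hg hn hℓ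
    have hlower := measure_empMean_upper hp hsum ha (g := fun x => -g x)
      (fun x => by rw [abs_neg]; exact hg x) hn hℓ
    rw [two_mul (Real.exp _), ENNReal.ofReal_add (Real.exp_pos _).le (Real.exp_pos _).le]
    refine (measure_mono ?_).trans ((measure_union_le _ _).trans (add_le_add hupper hlower))
    intro D hD
    simp only [Set.mem_ofPred_eq, Set.mem_union, lt_abs, Finset.sum_neg_distrib, mul_neg] at hD ⊢
    exact hD.imp id fun h => by linarith
  · have hg0 : ∀ x, g x = 0 := fun x => abs_nonpos_iff.mp ((hg x).trans ha)
    obtain ⟨x⟩ : Nonempty X := by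
      by_contra h
      rw [not_nonempty_iff] at h
      simp at hsum
    have ha0 : a = 0 := le_antisymm ha ((abs_nonneg _).trans (hg x))
    simp [hg0, ha0]

end Concentration

section Occupancy

variable {P : S → A → S → ℝ} {r : S → A → ℝ} {μ0 : S → ℝ} {γ : ℝ} {dD : S → A → ℝ}
  {π : S → A → ℝ}

lemma saDist_nonneg (hM : MDPAssumptions P r μ0 γ dD) (hπ : IsPolicy π) (t : ℕ) (s : S) (a : A) :
    0 ≤ saDist P μ0 π t s a := by
  induction t generalizing s a with
  | zero => exact mul_nonneg (hM.μ0_pos s).le (hπ.1 s a)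
  | succ t ih =>
    exact mul_nonneg (Finset.sum_nonneg fun s' _ => Finset.sum_nonneg fun a' _ =>
      mul_nonneg (ih s' a') (hM.P_nonneg _ _ _)) (hπ.1 s a)

lemma sum_saDist (hM : MDPAssumptions P r μ0 γ dD) (hπ : IsPolicy π) (t : ℕ) :
    ∑ s, ∑ a, saDist P μ0 π t s a = 1 := by
  induction t with
  | zero => simp only [saDist, ← Finset.mul_sum, hπ.2, mul_one, hM.μ0_sum]
  | succ t ih =>
    simp only [saDist, ← Finset.mul_sum, hπ.2, mul_one]
    rw [Finset.sum_comm]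
    simp_rw [Finset.sum_comm (s := (Finset.univ : Finset S)) (t := (Finset.univ : Finset A)),
      ← Finset.mul_sum, hM.P_sum, mul_one]
    rw [Finset.sum_comm, ih]

lemma saDist_le_one (hM : MDPAssumptions P r μ0 γ dD) (hπ : IsPolicy π) (t : ℕ) (s : S) (a : A) :
    saDist P μ0 π t s a ≤ 1 := by
  rw [← sum_saDist hM hπ t]
  exact (Finset.single_le_sum (fun a' _ => saDist_nonneg hM hπ t s a') (Finset.mem_univ a)).trans
    (Finset.single_le_sum (f := fun s' => ∑ a', saDist P μ0 π t s' a')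
      (fun s' _ => Finset.sum_nonneg fun a' _ => saDist_nonneg hM hπ t s' a') (Finset.mem_univ s))

lemma summable_discounted_saDist (hM : MDPAssumptions P r μ0 γ dD) (hπ : IsPolicy π)
    (s : S) (a : A) : Summable fun t => γ ^ t * saDist P μ0 π t s a :=
  Summable.of_nonneg_of_le
    (fun t => mul_nonneg (pow_nonneg hM.γ_nonneg t) (saDist_nonneg hM hπ t s a))
    (fun t => mul_le_of_le_one_right (pow_nonneg hM.γ_nonneg t) (saDist_le_one hM hπ t s a))
    (summable_geometric_of_lt_one hM.γ_nonneg hM.γ_lt_one)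

lemma occ_nonneg (hM : MDPAssumptions P r μ0 γ dD) (hπ : IsPolicy π) (s : S) (a : A) :
    0 ≤ occ P μ0 γ π s a :=
  mul_nonneg (sub_nonneg.mpr hM.γ_lt_one.le) (tsum_nonneg fun t =>
    mul_nonneg (pow_nonneg hM.γ_nonneg t) (saDist_nonneg hM hπ t s a))

lemma occ_eq (hM : MDPAssumptions P r μ0 γ dD) (hπ : IsPolicy π) (s : S) (a : A) :
    occ P μ0 γ π s a
      = ((1 - γ) * μ0 s + γ * ∑ s', ∑ a', P s' a' s * occ P μ0 γ π s' a') * π s a := by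
  have hsum := fun s a => (summable_discounted_saDist hM hπ s a).hasSum
  have hstep : HasSum (fun t => γ ^ (t + 1) * saDist P μ0 π (t + 1) s a)
      (γ * (∑ s', ∑ a', (∑' t, γ ^ t * saDist P μ0 π t s' a') * P s' a' s) * π s a) := by
    have h := ((hasSum_sum fun s' (_ : s' ∈ Finset.univ) =>
      hasSum_sum fun a' (_ : a' ∈ Finset.univ) =>
        (hsum s' a').mul_right (P s' a' s)).mul_left γ).mul_right (π s a)
    refine h.congr_fun fun t => ?_
    simp only [saDist, pow_succ, mul_assoc, ← Finset.mul_sum]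
    ring
  simp only [occ]
  rw [(summable_discounted_saDist hM hπ s a).tsum_eq_zero_add, hstep.tsum_eq]
  simp only [saDist, pow_zero, one_mul, mul_left_comm (P _ _ _) (1 - γ), ← Finset.mul_sum,
    mul_comm (P _ _ _)]
  ring

lemma bellmanFlow_occ (hM : MDPAssumptions P r μ0 γ dD) (hπ : IsPolicy π) :
    BellmanFlow P μ0 γ (occ P μ0 γ π) := by
  intro s
  rw [Finset.sum_congr rfl fun a _ => occ_eq hM hπ s a, ← Finset.mul_sum, hπ.2, mul_one]

/-- Testing the Bellman flow equations against a function `u`. -/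
lemma BellmanFlow.sum_mul {d : S → A → ℝ} (hd : BellmanFlow P μ0 γ d) (u : S → ℝ) :
    ∑ s, ∑ a, d s a * (u s - γ * ∑ s', P s a s' * u s') = (1 - γ) * ∑ s, μ0 s * u s := by
  have h1 : ∑ s, (∑ a, d s a) * u s = (1 - γ) * ∑ s, μ0 s * u s
      + γ * ∑ s, ∑ s', ∑ a', P s' a' s * d s' a' * u s := by
    simp only [hd _, add_mul, Finset.sum_add_distrib, Finset.mul_sum, Finset.sum_mul, mul_assoc]
  have h2 : ∑ s, ∑ s', ∑ a', P s' a' s * d s' a' * u s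
      = ∑ s, ∑ a, d s a * ∑ s', P s a s' * u s' := by
    rw [Finset.sum_comm]
    refine Finset.sum_congr rfl fun s' _ => ?_
    rw [Finset.sum_comm]
    refine Finset.sum_congr rfl fun a' _ => ?_
    rw [Finset.mul_sum]
    exact Finset.sum_congr rfl fun s _ => by ring
  have h3 : ∑ s, ∑ a, d s a * (u s - γ * ∑ s', P s a s' * u s')
      = ∑ s, (∑ a, d s a) * u s - γ * ∑ s, ∑ a, d s a * ∑ s', P s a s' * u s' := by
    rw [Finset.mul_sum, ← Finset.sum_sub_distrib]
    refine Finset.sum_congr rfl fun s _ => ?_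
    rw [Finset.mul_sum, Finset.sum_mul, ← Finset.sum_sub_distrib]
    exact Finset.sum_congr rfl fun a _ => by ring
  rw [h3, h1, h2]
  ring

/-- Maximum principle for the policy evaluation operator. -/
lemma le_of_le_discounted [Nonempty S] (hM : MDPAssumptions P r μ0 γ dD) (hπ : IsPolicy π)
    {u : S → ℝ} {c : ℝ}
    (hu : ∀ s, u s ≤ c + γ * ∑ a, π s a * ∑ s', P s a s' * u s') (s : S) :
    u s ≤ c / (1 - γ) := by
  obtain ⟨s₀, hs₀⟩ := Finite.exists_max u
  have havg : ∑ a, π s₀ a * ∑ s', P s₀ a s' * u s' ≤ u s₀ := by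
    calc ∑ a, π s₀ a * ∑ s', P s₀ a s' * u s'
        ≤ ∑ a, π s₀ a * ∑ s', P s₀ a s' * u s₀ := by
          gcongr with a _ s' _
          · exact hπ.1 _ _
          · exact hM.P_nonneg _ _ _
          · exact hs₀ s'
      _ = u s₀ := by simp only [← Finset.sum_mul, hM.P_sum, one_mul, hπ.2]
  have h := (hu s₀).trans (add_le_add_right (mul_le_mul_of_nonneg_left havg hM.γ_nonneg) c)
  refine (hs₀ s).trans ?_
  rw [le_div_iff₀ (sub_pos.mpr hM.γ_lt_one)]
  linarith

/-- The value function of a policy exists and takes values in `[0, 1 / (1 - γ)]`. -/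
lemma exists_value [Nonempty S] (hM : MDPAssumptions P r μ0 γ dD) (hπ : IsPolicy π) :
    ∃ u : S → ℝ, (∀ s, u s = ∑ a, π s a * (r s a + γ * ∑ s', P s a s' * u s')) ∧
      ∀ s, 0 ≤ u s ∧ u s ≤ 1 / (1 - γ) := by
  let T : (S → ℝ) →ₗ[ℝ] (S → ℝ) :=
    { toFun := fun u s => u s - γ * ∑ a, π s a * ∑ s', P s a s' * u s'
      map_add' := fun u v => by
        ext s
        simp only [Pi.add_apply, mul_add, Finset.sum_add_distrib]
        ring
      map_smul' := fun c u => by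
        ext s
        simp only [Pi.smul_apply, smul_eq_mul, RingHom.id_apply, mul_left_comm _ c,
          ← Finset.mul_sum]
        ring }
  have hT : ∀ u s, T u s = u s - γ * ∑ a, π s a * ∑ s', P s a s' * u s' := fun _ _ => rfl
  have hneg : ∀ (u : S → ℝ) s, γ * ∑ a, π s a * ∑ s', P s a s' * (-u) s'
      = -(γ * ∑ a, π s a * ∑ s', P s a s' * u s') := fun u s => by
    simp only [Pi.neg_apply, mul_neg, Finset.sum_neg_distrib]
  have hinj : Function.Injective T := by
    rw [← LinearMap.ker_eq_bot, LinearMap.ker_eq_bot']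
    intro u hu
    have hu' : ∀ s, u s = γ * ∑ a, π s a * ∑ s', P s a s' * u s' := fun s =>
      sub_eq_zero.mp ((hT u s).symm.trans (congrFun hu s))
    ext s
    have h1 := le_of_le_discounted hM hπ (u := u) (c := 0) (fun s => by linarith [hu' s]) s
    have h2 := le_of_le_discounted hM hπ (u := -u) (c := 0)
      (fun s => by rw [hneg, Pi.neg_apply]; linarith [hu' s]) s
    simp only [zero_div, Pi.neg_apply, Pi.zero_apply] at h1 h2 ⊢
    linarith
  obtain ⟨u, hu⟩ := LinearMap.injective_iff_surjective.mp hinj fun s => ∑ a, π s a * r s a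
  have hu' : ∀ s, u s = ∑ a, π s a * r s a + γ * ∑ a, π s a * ∑ s', P s a s' * u s' := fun s =>
    sub_eq_iff_eq_add.mp ((hT u s).symm.trans (congrFun hu s))
  have hr0 : ∀ s, 0 ≤ ∑ a, π s a * r s a := fun s =>
    Finset.sum_nonneg fun a _ => mul_nonneg (hπ.1 s a) (hM.r_nonneg s a)
  have hr1 : ∀ s, ∑ a, π s a * r s a ≤ 1 := fun s => by
    rw [← hπ.2 s]
    exact Finset.sum_le_sum fun a _ => mul_le_of_le_one_right (hπ.1 s a) (hM.r_le_one s a)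
  refine ⟨u, fun s => ?_, fun s => ⟨?_, ?_⟩⟩
  · rw [hu' s, Finset.mul_sum, ← Finset.sum_add_distrib]
    exact Finset.sum_congr rfl fun a _ => by ring
  · have h := le_of_le_discounted hM hπ (u := -u) (c := 0)
      (fun s => by rw [hneg, Pi.neg_apply]; linarith [hu' s, hr0 s]) s
    simp only [zero_div, Pi.neg_apply] at h
    linarith
  · exact le_of_le_discounted hM hπ (fun s => by linarith [hu' s, hr1 s]) s

lemma Jret_eq_sum_value (hM : MDPAssumptions P r μ0 γ dD) (hπ : IsPolicy π) {u : S → ℝ}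
    (hu : ∀ s, u s = ∑ a, π s a * (r s a + γ * ∑ s', P s a s' * u s')) :
    Jret P r μ0 γ π = (1 - γ) * ∑ s, μ0 s * u s := by
  rw [← (bellmanFlow_occ hM hπ).sum_mul u, Jret]
  refine Finset.sum_congr rfl fun s _ => ?_
  rw [← sub_eq_zero, ← Finset.sum_sub_distrib]
  set c := (1 - γ) * μ0 s + γ * ∑ s', ∑ a', P s' a' s * occ P μ0 γ π s' a' with hc
  have h : ∀ a, occ P μ0 γ π s a * r s a
      - occ P μ0 γ π s a * (u s - γ * ∑ s', P s a s' * u s')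
      = c * (π s a * (r s a + γ * ∑ s', P s a s' * u s') - π s a * u s) := fun a => by
    rw [occ_eq hM hπ s a, ← hc]
    ring
  rw [Finset.sum_congr rfl fun a _ => h a, ← Finset.mul_sum, Finset.sum_sub_distrib, ← hu s,
    ← Finset.sum_mul, hπ.2, one_mul, sub_self, mul_zero]

/-- Performance difference bound: the reward of a flow `d` exceeds the return of `π` by at most
the `ℓ¹` distance from `d` to its state marginal recombined with `π`. -/
lemma BellmanFlow.sum_reward_sub_Jret_le [Nonempty S] (hM : MDPAssumptions P r μ0 γ dD)
    (hπ : IsPolicy π) {d : S → A → ℝ} (hd : BellmanFlow P μ0 γ d) :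
    ∑ s, ∑ a, d s a * r s a - Jret P r μ0 γ π
      ≤ 1 / (1 - γ) * ∑ s, ∑ a, |d s a - (∑ a', d s a') * π s a| := by
  obtain ⟨u, hu, hub⟩ := exists_value hM hπ
  rw [Jret_eq_sum_value hM hπ hu, ← hd.sum_mul u, ← Finset.sum_sub_distrib, Finset.mul_sum]
  refine Finset.sum_le_sum fun s _ => ?_
  have hrewrite : ∑ a, d s a * r s a - ∑ a, d s a * (u s - γ * ∑ s', P s a s' * u s')
      = ∑ a, (d s a - (∑ a', d s a') * π s a) * (r s a + γ * ∑ s', P s a s' * u s') := by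
    have hmarg : (∑ a', d s a') * u s
        = ∑ a, (∑ a', d s a') * π s a * (r s a + γ * ∑ s', P s a s' * u s') := by
      conv_lhs => rw [hu s, Finset.mul_sum]
      exact Finset.sum_congr rfl fun a _ => by ring
    simp only [sub_mul, Finset.sum_sub_distrib, ← hmarg]
    rw [Finset.sum_mul, ← Finset.sum_sub_distrib, ← Finset.sum_sub_distrib]
    exact Finset.sum_congr rfl fun a _ => by ring
  rw [hrewrite, Finset.mul_sum]
  refine Finset.sum_le_sum fun a _ => ?_
  have hP0 : 0 ≤ ∑ s', P s a s' * u s' :=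
    Finset.sum_nonneg fun s' _ => mul_nonneg (hM.P_nonneg _ _ _) (hub s').1
  have hP1 : ∑ s', P s a s' * u s' ≤ 1 / (1 - γ) := by
    calc ∑ s', P s a s' * u s' ≤ ∑ s', P s a s' * (1 / (1 - γ)) :=
          Finset.sum_le_sum fun s' _ =>
            mul_le_mul_of_nonneg_left (hub s').2 (hM.P_nonneg _ _ _)
      _ = 1 / (1 - γ) := by rw [← Finset.sum_mul, hM.P_sum, one_mul]
  have hq0 : 0 ≤ r s a + γ * ∑ s', P s a s' * u s' :=
    add_nonneg (hM.r_nonneg s a) (mul_nonneg hM.γ_nonneg hP0)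
  have hq1 : r s a + γ * ∑ s', P s a s' * u s' ≤ 1 / (1 - γ) := by
    have hpos : 0 < 1 - γ := sub_pos.mpr hM.γ_lt_one
    have : (1 : ℝ) + γ * (1 / (1 - γ)) = 1 / (1 - γ) := by field_simp; ring
    linarith [hM.r_le_one s a, mul_le_mul_of_nonneg_left hP1 hM.γ_nonneg]
  rw [mul_comm (1 / (1 - γ))]
  exact (mul_le_mul_of_nonneg_right (le_abs_self _) hq0).trans
    (mul_le_mul_of_nonneg_left hq1 (abs_nonneg _))

end Occupancy

section PolicyExtraction

variable {S A : Type*} [Fintype A]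

/-- Normalizing `y` to a probability vector (uniform where its mass vanishes) and rescaling it to
the mass of `x` moves `x` by at most `2 * ‖x - y‖₁`. -/
lemma sum_abs_sub_normPolicy_le [Nonempty A] {x y : S → A → ℝ} (hx : ∀ s a, 0 ≤ x s a)
    (hy : ∀ s a, 0 ≤ y s a) (s : S) :
    ∑ a, |x s a - (∑ a', x s a') * normPolicy y s a| ≤ 2 * ∑ a, |x s a - y s a| := by
  have hX : 0 ≤ ∑ a, x s a := Finset.sum_nonneg fun a _ => hx s a
  have hdiff : |∑ a, y s a - ∑ a, x s a| ≤ ∑ a, |x s a - y s a| := by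
    rw [← Finset.sum_sub_distrib]
    refine (Finset.abs_sum_le_sum_abs _ _).trans (Finset.sum_le_sum fun a _ => ?_)
    rw [abs_sub_comm]
  by_cases hY : 0 < ∑ a, y s a
  · have hterm : ∀ a, |x s a - (∑ a', x s a') * normPolicy y s a|
        ≤ |x s a - y s a| + y s a / (∑ a', y s a') * |∑ a', y s a' - ∑ a', x s a'| := fun a => by
      have h0 : 0 ≤ y s a / ∑ a', y s a' := div_nonneg (hy s a) hY.le
      have h : x s a - (∑ a', x s a') * normPolicy y s a = (x s a - y s a)
          + y s a / (∑ a', y s a') * (∑ a', y s a' - ∑ a', x s a') := by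
        rw [normPolicy, if_pos hY]
        field_simp
        ring
      rw [h]
      refine (abs_add_le _ _).trans ?_
      rw [abs_mul, abs_of_nonneg h0]
    refine (Finset.sum_le_sum fun a _ => hterm a).trans ?_
    rw [Finset.sum_add_distrib, ← Finset.sum_mul, ← Finset.sum_div, div_self hY.ne', one_mul]
    linarith
  · have hY0 : ∑ a, y s a = 0 := le_antisymm (not_lt.mp hY) (Finset.sum_nonneg fun a _ => hy s a)
    have hy0 : ∀ a, y s a = 0 := fun a =>
      (Finset.sum_eq_zero_iff_of_nonneg fun a _ => hy s a).mp hY0 a (Finset.mem_univ a)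
    have hterm : ∀ a, |x s a - (∑ a', x s a') * normPolicy y s a|
        ≤ x s a + (∑ a', x s a') * (Fintype.card A : ℝ)⁻¹ := fun a => by
      rw [normPolicy, if_neg hY]
      have h0 : 0 ≤ (∑ a', x s a') * (Fintype.card A : ℝ)⁻¹ := by positivity
      rw [abs_le]
      constructor <;> linarith [hx s a]
    refine (Finset.sum_le_sum fun a _ => hterm a).trans ?_
    have hcard : (Fintype.card A : ℝ) ≠ 0 := by exact_mod_cast Fintype.card_ne_zero
    simp only [Finset.sum_add_distrib, hy0, sub_zero, abs_of_nonneg (hx s _), Finset.sum_const,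
      Finset.card_univ, nsmul_eq_mul]
    rw [mul_left_comm, mul_inv_cancel₀ hcard]
    linarith

lemma isPolicy_normPolicy [Nonempty A] {y : S → A → ℝ} (hy : ∀ s a, 0 ≤ y s a) :
    IsPolicy (normPolicy y) := by
  refine ⟨fun s a => ?_, fun s => ?_⟩
  · unfold normPolicy
    split_ifs with h
    · exact div_nonneg (hy s a) h.le
    · positivity
  · unfold normPolicy
    split_ifs with h
    · rw [← Finset.sum_div, div_self h.ne']
    · simp

lemma extractPolicy_behPolicy {dD w : S → A → ℝ} (hD : ∀ s, 0 < ∑ a, dD s a) :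
    extractPolicy (behPolicy dD) w = normPolicy (dstar dD w) := by
  ext s a
  have hsum : ∑ a', w s a' * behPolicy dD s a' = (∑ a', dstar dD w s a') / ∑ a', dD s a' := by
    rw [Finset.sum_div]
    refine Finset.sum_congr rfl fun a' _ => ?_
    rw [behPolicy, normPolicy, if_pos (hD s), dstar, mul_div_assoc]
  unfold extractPolicy
  rw [hsum, behPolicy, normPolicy, normPolicy, if_pos (hD s), ← mul_div_assoc,
    div_div_div_cancel_right₀ (hD s).ne', dstar]
  simp only [div_pos_iff_of_pos_right (hD s)]

end PolicyExtraction

section Lagrangian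

variable {P : S → A → S → ℝ} {r : S → A → ℝ} {μ0 : S → ℝ} {γ : ℝ} {dD : S → A → ℝ}
  {f f' : ℝ → ℝ} {α : ℝ} {v vst : S → ℝ} {w wst : S → A → ℝ}

lemma Lag_eq_of_bellmanFlow (hw : BellmanFlow P μ0 γ (dstar dD w)) (v : S → ℝ) :
    Lag P r μ0 γ dD f α v w
      = ∑ s, ∑ a, dstar dD w s a * r s a - α * ∑ s, ∑ a, dD s a * f (w s a) := by
  rw [Lag, ← hw.sum_mul v]
  have h : ∑ s, ∑ a, dD s a * (w s a * eV P r γ v s a) = ∑ s, ∑ a, dstar dD w s a * r s a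
      - ∑ s, ∑ a, dstar dD w s a * (v s - γ * ∑ s', P s a s' * v s') := by
    simp only [← Finset.sum_sub_distrib]
    refine Finset.sum_congr rfl fun s _ => Finset.sum_congr rfl fun a _ => ?_
    rw [eV, dstar]
    ring
  rw [h]
  ring

lemma Lag_sub_left (v₁ v₂ : S → ℝ) :
    Lag P r μ0 γ dD f α v₁ w - Lag P r μ0 γ dD f α v₂ w
      = (1 - γ) * ∑ s, μ0 s * (v₁ s - v₂ s)
        + γ * ∑ s, (∑ s', ∑ a', P s' a' s * dstar dD w s' a') * (v₁ s - v₂ s)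
        - ∑ s, (∑ a, dstar dD w s a) * (v₁ s - v₂ s) := by
  have h1 : ∑ s, (∑ s', ∑ a', P s' a' s * dstar dD w s' a') * (v₁ s - v₂ s)
      = ∑ s, ∑ a, dstar dD w s a * ∑ s', P s a s' * (v₁ s' - v₂ s') := by
    simp only [Finset.sum_mul]
    rw [Finset.sum_comm]
    refine Finset.sum_congr rfl fun s' _ => ?_
    rw [Finset.sum_comm]
    refine Finset.sum_congr rfl fun a' _ => ?_
    rw [Finset.mul_sum]
    exact Finset.sum_congr rfl fun s _ => by ring
  have h2 : ∑ s, ∑ a, dD s a * (w s a * eV P r γ v₁ s a)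
      - ∑ s, ∑ a, dD s a * (w s a * eV P r γ v₂ s a)
      = γ * ∑ s, ∑ a, dstar dD w s a * ∑ s', P s a s' * (v₁ s' - v₂ s')
        - ∑ s, (∑ a, dstar dD w s a) * (v₁ s - v₂ s) := by
    simp only [Finset.mul_sum _ _ γ, Finset.sum_mul (ι := A), ← Finset.sum_sub_distrib]
    refine Finset.sum_congr rfl fun s _ => Finset.sum_congr rfl fun a _ => ?_
    simp only [mul_sub, Finset.sum_sub_distrib, eV, dstar]
    ring
  have h3 : ∑ s, μ0 s * (v₁ s - v₂ s) = ∑ s, μ0 s * v₁ s - ∑ s, μ0 s * v₂ s := by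
    simp only [mul_sub, Finset.sum_sub_distrib]
  rw [h1, h3, Lag, Lag]
  linear_combination h2

/-- Minimality in `v` at a saddle point forces the Bellman flow equations. -/
lemma IsSaddle.bellmanFlow (h : IsSaddle P r μ0 γ dD f α vst wst) :
    BellmanFlow P μ0 γ (dstar dD wst) := by
  set G : S → ℝ := fun s => (1 - γ) * μ0 s + γ * ∑ s', ∑ a', P s' a' s * dstar dD wst s' a'
    - ∑ a, dstar dD wst s a with hG
  have hle := h.2.1 (vst - G)
  have hsub := Lag_sub_left (P := P) (r := r) (μ0 := μ0) (γ := γ) (dD := dD) (f := f) (α := α)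
    (w := wst) (vst - G) vst
  have hsq : (1 - γ) * ∑ s, μ0 s * ((vst - G) s - vst s)
        + γ * ∑ s, (∑ s', ∑ a', P s' a' s * dstar dD wst s' a') * ((vst - G) s - vst s)
        - ∑ s, (∑ a, dstar dD wst s a) * ((vst - G) s - vst s) = -∑ s, G s ^ 2 := by
    rw [Finset.mul_sum, Finset.mul_sum, ← Finset.sum_add_distrib, ← Finset.sum_sub_distrib,
      ← Finset.sum_neg_distrib]
    refine Finset.sum_congr rfl fun s _ => ?_
    rw [Pi.sub_apply, show G s ^ 2 = ((1 - γ) * μ0 s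
      + γ * ∑ s', ∑ a', P s' a' s * dstar dD wst s' a' - ∑ a, dstar dD wst s a) * G s by
        rw [sq]]
    ring
  have hzero : ∑ s, G s ^ 2 = 0 :=
    le_antisymm (by linarith) (Finset.sum_nonneg fun s _ => sq_nonneg _)
  intro s
  have hs := (Finset.sum_eq_zero_iff_of_nonneg fun s _ => sq_nonneg (G s)).mp hzero s
    (Finset.mem_univ s)
  have : G s = 0 := by simpa using hs
  simp only [hG] at this
  linarith

/-- Strong concavity in `w` gives quadratic growth around the maximizer. -/
lemma IsSaddle.quadratic_growth (h : IsSaddle P r μ0 γ dD f α vst wst)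
    (hD : ∀ s a, 0 ≤ dD s a) (hα : 0 < α) {Mf : ℝ} (hf : StrongConvexOn Set.univ Mf f)
    (hMf : 0 < Mf) (hw : ∀ s a, 0 ≤ w s a) :
    α * Mf / 2 * ∑ s, ∑ a, dD s a * (w s a - wst s a) ^ 2
      ≤ Lag P r μ0 γ dD f α vst wst - Lag P r μ0 γ dD f α vst w := by
  set K := Lag P r μ0 γ dD f α vst wst - Lag P r μ0 γ dD f α vst w with hK
  set c := α * Mf / 2 * ∑ s, ∑ a, dD s a * (w s a - wst s a) ^ 2 with hc
  have hc0 : 0 ≤ c := mul_nonneg (by positivity) (Finset.sum_nonneg fun s _ =>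
    Finset.sum_nonneg fun a _ => mul_nonneg (hD s a) (sq_nonneg _))
  have hK0 : 0 ≤ K := sub_nonneg.mpr (h.2.2 w hw)
  have hseg : ∀ t : ℝ, 0 < t → t < 1 → (1 - t) * c ≤ K := by
    intro t ht0 ht1
    set wt : S → A → ℝ := fun s a => (1 - t) * wst s a + t * w s a with hwt
    have hmax := h.2.2 wt fun s a =>
      add_nonneg (mul_nonneg (by linarith) (h.1 s a)) (mul_nonneg ht0.le (hw s a))
    have hpt : ∀ s a, f (wt s a) ≤ (1 - t) * f (wst s a) + t * f (w s a)
        - (1 - t) * t * (Mf / 2 * (w s a - wst s a) ^ 2) := fun s a => by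
      have := hf.2 (Set.mem_univ (wst s a)) (Set.mem_univ (w s a)) (sub_nonneg.mpr ht1.le)
        ht0.le (sub_add_cancel 1 t)
      simp only [smul_eq_mul, Real.norm_eq_abs, sq_abs] at this
      rw [← neg_sub (wst s a), neg_sq]
      exact this
    have hfsum : ∑ s, ∑ a, dD s a * f (wt s a)
        ≤ (1 - t) * ∑ s, ∑ a, dD s a * f (wst s a) + t * ∑ s, ∑ a, dD s a * f (w s a)
          - (1 - t) * t * (Mf / 2 * ∑ s, ∑ a, dD s a * (w s a - wst s a) ^ 2) := by
      simp only [Finset.mul_sum, ← Finset.sum_add_distrib, ← Finset.sum_sub_distrib]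
      refine Finset.sum_le_sum fun s _ => Finset.sum_le_sum fun a _ => ?_
      refine (mul_le_mul_of_nonneg_left (hpt s a) (hD s a)).trans_eq ?_
      ring
    have hlin : ∑ s, ∑ a, dD s a * (wt s a * eV P r γ vst s a)
        = (1 - t) * ∑ s, ∑ a, dD s a * (wst s a * eV P r γ vst s a)
          + t * ∑ s, ∑ a, dD s a * (w s a * eV P r γ vst s a) := by
      simp only [Finset.mul_sum, ← Finset.sum_add_distrib]
      exact Finset.sum_congr rfl fun s _ => Finset.sum_congr rfl fun a _ => by
        simp only [hwt]; ring
    have hmul := mul_le_mul_of_nonneg_left hfsum hα.le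
    have hconc : t * ((1 - t) * c) ≤ t * K := by
      simp only [hK, hc]
      simp only [Lag] at hmax ⊢
      rw [hlin] at hmax
      linear_combination hmax + hmul
    exact le_of_mul_le_mul_left hconc ht0
  by_contra hlt
  rw [not_le] at hlt
  have hcpos : 0 < c := hK0.trans_lt hlt
  have ht := hseg ((c - K) / (2 * c)) (div_pos (by linarith) (by linarith))
    (by rw [div_lt_one (by linarith)]; linarith)
  have : (1 - (c - K) / (2 * c)) * c = (c + K) / 2 := by field_simp; ring
  linarith

lemma Lag_sub_left_le (hM : MDPAssumptions P r μ0 γ dD) {Bw : ℝ} (hBw : 0 ≤ Bw)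
    (hw : ∀ s a, 0 ≤ w s a ∧ w s a ≤ Bw) (v₁ v₂ : S → ℝ) :
    Lag P r μ0 γ dD f α v₁ w - Lag P r μ0 γ dD f α v₂ w
      ≤ (Bw + 1) * ((∑ s, μ0 s * |v₁ s - v₂ s|) + (∑ s, (∑ a, dD s a) * |v₁ s - v₂ s|)
          + ∑ s, (∑ s', ∑ a', dD s' a' * P s' a' s) * |v₁ s - v₂ s|) := by
  rw [Lag_sub_left]
  have hγ0 := hM.γ_nonneg
  have hγ1 := hM.γ_lt_one
  have hds : ∀ s a, 0 ≤ dstar dD w s a := fun s a => mul_nonneg (hw s a).1 (hM.dD_nonneg s a)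
  have hds' : ∀ s a, dstar dD w s a ≤ Bw * dD s a := fun s a =>
    mul_le_mul_of_nonneg_right (hw s a).2 (hM.dD_nonneg s a)
  have hm0 : 0 ≤ ∑ s, μ0 s * |v₁ s - v₂ s| :=
    Finset.sum_nonneg fun s _ => mul_nonneg (hM.μ0_pos s).le (abs_nonneg _)
  have hD0 : 0 ≤ ∑ s, (∑ a, dD s a) * |v₁ s - v₂ s| := Finset.sum_nonneg fun s _ =>
    mul_nonneg (Finset.sum_nonneg fun a _ => hM.dD_nonneg s a) (abs_nonneg _)
  have hP0 : 0 ≤ ∑ s, (∑ s', ∑ a', dD s' a' * P s' a' s) * |v₁ s - v₂ s| :=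
    Finset.sum_nonneg fun s _ => mul_nonneg (Finset.sum_nonneg fun s' _ =>
      Finset.sum_nonneg fun a' _ => mul_nonneg (hM.dD_nonneg _ _) (hM.P_nonneg _ _ _))
      (abs_nonneg _)
  have h1 : ∑ s, μ0 s * (v₁ s - v₂ s) ≤ ∑ s, μ0 s * |v₁ s - v₂ s| :=
    Finset.sum_le_sum fun s _ => mul_le_mul_of_nonneg_left (le_abs_self _) (hM.μ0_pos s).le
  have h2 : ∑ s, (∑ s', ∑ a', P s' a' s * dstar dD w s' a') * (v₁ s - v₂ s)
      ≤ Bw * ∑ s, (∑ s', ∑ a', dD s' a' * P s' a' s) * |v₁ s - v₂ s| := by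
    rw [Finset.mul_sum]
    refine Finset.sum_le_sum fun s _ => ?_
    rw [← mul_assoc]
    refine (mul_le_mul_of_nonneg_left (le_abs_self _) (Finset.sum_nonneg fun s' _ =>
      Finset.sum_nonneg fun a' _ => mul_nonneg (hM.P_nonneg _ _ _) (hds _ _))).trans
      (mul_le_mul_of_nonneg_right ?_ (abs_nonneg _))
    simp only [Finset.mul_sum]
    refine Finset.sum_le_sum fun s' _ => Finset.sum_le_sum fun a' _ => ?_
    refine (mul_le_mul_of_nonneg_left (hds' s' a') (hM.P_nonneg _ _ _)).trans_eq (by ring)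
  have h3 : -∑ s, (∑ a, dstar dD w s a) * (v₁ s - v₂ s)
      ≤ Bw * ∑ s, (∑ a, dD s a) * |v₁ s - v₂ s| := by
    rw [Finset.mul_sum, ← Finset.sum_neg_distrib]
    refine Finset.sum_le_sum fun s _ => ?_
    rw [← mul_assoc, ← mul_neg]
    refine (mul_le_mul_of_nonneg_left (neg_le_abs _)
      (Finset.sum_nonneg fun a _ => hds s a)).trans
      (mul_le_mul_of_nonneg_right ?_ (abs_nonneg _))
    rw [Finset.mul_sum]
    exact Finset.sum_le_sum fun a _ => hds' s a
  have h1' := mul_le_mul_of_nonneg_left h1 (sub_nonneg.mpr hγ1.le)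
  have h2' := mul_le_mul_of_nonneg_left h2 hγ0
  have h4 := mul_nonneg hγ0 hm0
  have h5 := mul_nonneg (sub_nonneg.mpr hγ1.le) (mul_nonneg hBw hP0)
  have h6 := mul_nonneg hBw hm0
  linarith

lemma abs_eV_le (hM : MDPAssumptions P r μ0 γ dD) {Bv : ℝ} (hv : ∀ s, |v s| ≤ Bv)
    (s : S) (a : A) : |eV P r γ v s a| ≤ (1 + γ) * Bv + 1 := by
  have hPv : |∑ s', P s a s' * v s'| ≤ Bv := by
    refine (Finset.abs_sum_le_sum_abs _ _).trans ?_
    calc ∑ s', |P s a s' * v s'| ≤ ∑ s', P s a s' * Bv := Finset.sum_le_sum fun s' _ => by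
          rw [abs_mul, abs_of_nonneg (hM.P_nonneg _ _ _)]
          exact mul_le_mul_of_nonneg_left (hv s') (hM.P_nonneg _ _ _)
      _ = Bv := by rw [← Finset.sum_mul, hM.P_sum, one_mul]
  rw [abs_le] at hPv
  have h1 := mul_le_mul_of_nonneg_left hPv.1 hM.γ_nonneg
  have h2 := mul_le_mul_of_nonneg_left hPv.2 hM.γ_nonneg
  have h3 := abs_le.mp (hv s)
  rw [eV, abs_le]
  constructor <;> linarith [hM.r_nonneg s a, hM.r_le_one s a]

lemma Lag_sub_right_le (hM : MDPAssumptions P r μ0 γ dD) (hα : 0 < α) {Bw Be Bf' : ℝ}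
    (hf : ∀ x, HasDerivAt f (f' x) x) (hf' : ∀ x, 0 ≤ x → x ≤ Bw → |f' x| ≤ Bf')
    (he : ∀ s a, |eV P r γ v s a| ≤ Be) {w₁ w₂ : S → A → ℝ}
    (hw₁ : ∀ s a, 0 < dD s a → 0 ≤ w₁ s a ∧ w₁ s a ≤ Bw)
    (hw₂ : ∀ s a, 0 < dD s a → 0 ≤ w₂ s a ∧ w₂ s a ≤ Bw) :
    Lag P r μ0 γ dD f α v w₂ - Lag P r μ0 γ dD f α v w₁
      ≤ (Be + α * Bf') * ∑ s, ∑ a, dD s a * |w₁ s a - w₂ s a| := by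
  have hpt : ∀ s a, dD s a * (w₂ s a * eV P r γ v s a) - α * (dD s a * f (w₂ s a))
      - (dD s a * (w₁ s a * eV P r γ v s a) - α * (dD s a * f (w₁ s a)))
      ≤ (Be + α * Bf') * (dD s a * |w₁ s a - w₂ s a|) := by
    intro s a
    obtain h0 | hpos := (hM.dD_nonneg s a).eq_or_lt
    · simp [← h0]
    · have hlip := (convex_Icc (0 : ℝ) Bw).norm_image_sub_le_of_norm_hasDerivWithin_le
        (fun x _ => (hf x).hasDerivWithinAt) (fun x hx => hf' x hx.1 hx.2)
        (hw₂ s a hpos) (hw₁ s a hpos)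
      simp only [Real.norm_eq_abs] at hlip
      have h1 : (w₂ s a - w₁ s a) * eV P r γ v s a ≤ |w₁ s a - w₂ s a| * Be := by
        refine (le_abs_self _).trans ?_
        rw [abs_mul, abs_sub_comm]
        exact mul_le_mul_of_nonneg_left (he s a) (abs_nonneg _)
      have h2 := mul_le_mul_of_nonneg_left ((le_abs_self _).trans hlip) hα.le
      have h3 := mul_le_mul_of_nonneg_left (add_le_add h1 h2) hpos.le
      linarith
  simp only [Finset.mul_sum _ _ (Be + α * Bf')]
  refine le_trans (le_of_eq ?_)
    (Finset.sum_le_sum fun s _ => Finset.sum_le_sum fun a _ => hpt s a)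
  simp only [Finset.sum_sub_distrib, ← Finset.mul_sum, Lag]
  ring

end Lagrangian

section UniformDeviation

variable {P : S → A → S → ℝ} {r : S → A → ℝ} {μ0 : S → ℝ} {γ : ℝ} {dD : S → A → ℝ}
  {f : ℝ → ℝ} {α : ℝ}

lemma tupleWeight_nonneg (hM : MDPAssumptions P r μ0 γ dD) (x : (S × A) × S) :
    0 ≤ tupleWeight P dD x :=
  mul_nonneg (hM.dD_nonneg _ _) (hM.P_nonneg _ _ _)

lemma sum_tupleWeight (hM : MDPAssumptions P r μ0 γ dD) : ∑ x, tupleWeight P dD x = 1 := by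
  simp only [Fintype.sum_prod_type, tupleWeight, ← Finset.mul_sum, hM.P_sum, mul_one, hM.dD_sum]

/-- The part of the empirical Lagrangian contributed by a single transition. -/
noncomputable def transitionTerm (r : S → A → ℝ) (γ : ℝ) (f : ℝ → ℝ) (α : ℝ) (v : S → ℝ)
    (w : S → A → ℝ) (x : (S × A) × S) : ℝ :=
  w x.1.1 x.1.2 * (r x.1.1 x.1.2 + γ * v x.2 - v x.1.1) - α * f (w x.1.1 x.1.2)

lemma sum_tupleWeight_mul_transitionTerm (hM : MDPAssumptions P r μ0 γ dD) (v : S → ℝ)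
    (w : S → A → ℝ) :
    ∑ x, tupleWeight P dD x * transitionTerm r γ f α v w x
      = ∑ s, ∑ a, dD s a * (w s a * eV P r γ v s a)
        - α * ∑ s, ∑ a, dD s a * f (w s a) := by
  simp only [Fintype.sum_prod_type, Finset.mul_sum _ _ α, ← Finset.sum_sub_distrib]
  refine Finset.sum_congr rfl fun s _ => Finset.sum_congr rfl fun a _ => ?_
  have h : ∀ s', tupleWeight P dD ((s, a), s') * transitionTerm r γ f α v w ((s, a), s')
      = dD s a * (w s a * (r s a - v s) - α * f (w s a)) * P s a s'
        + dD s a * w s a * γ * (P s a s' * v s') := fun s' => by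
    simp only [tupleWeight, transitionTerm]
    ring
  rw [Finset.sum_congr rfl fun s' _ => h s', Finset.sum_add_distrib, ← Finset.mul_sum,
    ← Finset.mul_sum, hM.P_sum, eV]
  ring

lemma empLag_sub_Lag (hM : MDPAssumptions P r μ0 γ dD) {n n0 : ℕ} (D : Fin n → (S × A) × S)
    (D0 : Fin n0 → S) (v : S → ℝ) (w : S → A → ℝ) :
    empLag r γ f α D D0 v w - Lag P r μ0 γ dD f α v w
      = (1 - γ) * ((n0 : ℝ)⁻¹ * ∑ j, v (D0 j) - ∑ s, μ0 s * v s)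
        + ((n : ℝ)⁻¹ * ∑ i, transitionTerm r γ f α v w (D i)
          - ∑ x, tupleWeight P dD x * transitionTerm r γ f α v w x) := by
  rw [sum_tupleWeight_mul_transitionTerm hM]
  simp only [empLag, Lag, transitionTerm, Finset.sum_sub_distrib, ← Finset.mul_sum _ _ α]
  ring

lemma abs_transitionTerm_le (hM : MDPAssumptions P r μ0 γ dD) (hα : 0 < α) {Bw Bf Bv : ℝ}
    (hf : ∀ x, 0 ≤ x → x ≤ Bw → |f x| ≤ Bf) {v : S → ℝ} (hv : ∀ s, |v s| ≤ Bv)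
    {w : S → A → ℝ} (hw : ∀ s a, 0 ≤ w s a ∧ w s a ≤ Bw) (x : (S × A) × S) :
    |transitionTerm r γ f α v w x| ≤ α * Bf + Bw * ((1 + γ) * Bv + 1) := by
  obtain ⟨⟨s, a⟩, s'⟩ := x
  have he : |r s a + γ * v s' - v s| ≤ (1 + γ) * Bv + 1 := by
    have h1 := abs_le.mp (hv s)
    have h2 := abs_le.mp (hv s')
    have h3 := mul_le_mul_of_nonneg_left h2.1 hM.γ_nonneg
    have h4 := mul_le_mul_of_nonneg_left h2.2 hM.γ_nonneg
    rw [abs_le]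
    constructor <;> linarith [hM.r_nonneg s a, hM.r_le_one s a]
  have hw' := hw s a
  calc |transitionTerm r γ f α v w ((s, a), s')|
      ≤ |w s a * (r s a + γ * v s' - v s)| + |α * f (w s a)| := abs_sub _ _
    _ = w s a * |r s a + γ * v s' - v s| + α * |f (w s a)| := by
        rw [abs_mul, abs_mul, abs_of_nonneg hw'.1, abs_of_pos hα]
    _ ≤ Bw * ((1 + γ) * Bv + 1) + α * Bf := by
        gcongr
        · exact hw'.1.trans hw'.2
        · exact hw'.2
        · exact hf _ hw'.1 hw'.2
    _ = _ := add_comm _ _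

lemma card_mul_ofReal_exp_neg_log {N : ℕ} (hN : 0 < N) {δ : ℝ} (hδ : 0 < δ) :
    N • ENNReal.ofReal (2 * Real.exp (-Real.log (4 * (N : ℝ) / δ))) = ENNReal.ofReal (δ / 2) := by
  have hN' : (0 : ℝ) < N := by exact_mod_cast hN
  rw [← ENNReal.ofReal_nsmul, Real.exp_neg, Real.exp_log (by positivity), nsmul_eq_mul]
  congr 1
  field_simp
  norm_num

lemma log_four_mul_div_nonneg {N : ℕ} (hN : 0 < N) {δ : ℝ} (hδ0 : 0 < δ) (hδ1 : δ < 1) :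
    0 ≤ Real.log (4 * (N : ℝ) / δ) := by
  have hN' : (1 : ℝ) ≤ N := by exact_mod_cast hN
  refine Real.log_nonneg ?_
  rw [le_div_iff₀ hδ0]
  linarith

variable [MeasurableSpace S] [MeasurableSpace A] [MeasurableSingletonClass S]
  [MeasurableSingletonClass A]

/-- Except with probability `δ`, the empirical Lagrangian is uniformly `ε_stat`-close to the
population Lagrangian over `V × W`. -/
lemma dataMeasure_exists_deviation_le (hM : MDPAssumptions P r μ0 γ dD) (hα : 0 < α)
    {Bw Bf Bv δ : ℝ} (hδ0 : 0 < δ) (hδ1 : δ < 1)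
    (hf : ∀ x, 0 ≤ x → x ≤ Bw → |f x| ≤ Bf)
    {V : Finset (S → ℝ)} {W : Finset (S → A → ℝ)} (hV : V.Nonempty) (hW : W.Nonempty)
    (hVb : ∀ v ∈ V, ∀ s, |v s| ≤ Bv) (hWb : ∀ w ∈ W, ∀ s a, 0 ≤ w s a ∧ w s a ≤ Bw)
    {n n0 : ℕ} (hn : 0 < n) (hn0 : 0 < n0) :
    dataMeasure P dD μ0 n n0 {ω | ∃ v ∈ V, ∃ w ∈ W,
        epsStat γ α Bv Bf Bw ((1 + γ) * Bv + 1) δ V.card W.card n n0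
          < |empLag r γ f α ω.1 ω.2 v w - Lag P r μ0 γ dD f α v w|}
      ≤ ENNReal.ofReal δ := by
  have := isProbabilityMeasure_discMeasure (tupleWeight_nonneg hM) (sum_tupleWeight hM)
  have := isProbabilityMeasure_discMeasure (fun s => (hM.μ0_pos s).le) hM.μ0_sum
  set b := α * Bf + Bw * ((1 + γ) * Bv + 1) with hb
  set E₀ : (S → ℝ) → Set (Fin n0 → S) := fun v =>
    {D0 | Bv * √(2 * Real.log (4 * (V.card : ℝ) / δ) / n0)
      < |(n0 : ℝ)⁻¹ * ∑ j, v (D0 j) - ∑ s, μ0 s * v s|} with hE₀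
  set E₁ : (S → ℝ) × (S → A → ℝ) → Set (Fin n → (S × A) × S) := fun q =>
    {D | b * √(2 * Real.log (4 * ((V ×ˢ W).card : ℝ) / δ) / n)
      < |(n : ℝ)⁻¹ * ∑ i, transitionTerm r γ f α q.1 q.2 (D i)
        - ∑ x, tupleWeight P dD x * transitionTerm r γ f α q.1 q.2 x|} with hE₁
  have hsub : {ω : (Fin n → (S × A) × S) × (Fin n0 → S) | ∃ v ∈ V, ∃ w ∈ W,
      epsStat γ α Bv Bf Bw ((1 + γ) * Bv + 1) δ V.card W.card n n0
        < |empLag r γ f α ω.1 ω.2 v w - Lag P r μ0 γ dD f α v w|}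
      ⊆ (⋃ v ∈ V, Prod.snd ⁻¹' E₀ v) ∪ ⋃ q ∈ V ×ˢ W, Prod.fst ⁻¹' E₁ q := by
    rintro ω ⟨v, hv, w, hw, hlt⟩
    by_contra hnot
    simp only [Set.mem_union, Set.mem_iUnion, not_or, not_exists] at hnot
    have h₀ : |(n0 : ℝ)⁻¹ * ∑ j, v (ω.2 j) - ∑ s, μ0 s * v s|
        ≤ Bv * √(2 * Real.log (4 * (V.card : ℝ) / δ) / n0) := not_lt.mp (hnot.1 v hv)
    have h₁ : |(n : ℝ)⁻¹ * ∑ i, transitionTerm r γ f α v w (ω.1 i)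
        - ∑ x, tupleWeight P dD x * transitionTerm r γ f α v w x|
        ≤ b * √(2 * Real.log (4 * ((V ×ˢ W).card : ℝ) / δ) / n) :=
      not_lt.mp (hnot.2 (v, w) (Finset.mk_mem_product hv hw))
    refine hlt.not_ge ?_
    rw [empLag_sub_Lag hM, epsStat, mul_assoc]
    rw [Finset.card_product, Nat.cast_mul] at h₁
    refine (abs_add_le _ _).trans (add_le_add ?_ h₁)
    rw [abs_mul, abs_of_pos (sub_pos.mpr hM.γ_lt_one)]
    exact mul_le_mul_of_nonneg_left h₀ (sub_pos.mpr hM.γ_lt_one).le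
  have hVW : (V ×ˢ W).Nonempty := hV.product hW
  have hmeas₀ : dataMeasure P dD μ0 n n0 (⋃ v ∈ V, Prod.snd ⁻¹' E₀ v)
      ≤ ENNReal.ofReal (δ / 2) := by
    rw [← card_mul_ofReal_exp_neg_log hV.card_pos hδ0]
    refine (measure_biUnion_finset_le _ _).trans (Finset.sum_le_card_nsmul _ _ _ fun v hv => ?_)
    rw [dataMeasure, measurePreserving_snd.measure_preimage
      (Set.toFinite _).measurableSet.nullMeasurableSet]
    exact measure_empMean_dev (fun s => (hM.μ0_pos s).le) hM.μ0_sum (hVb v hv) hn0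
      (log_four_mul_div_nonneg hV.card_pos hδ0 hδ1)
  have hmeas₁ : dataMeasure P dD μ0 n n0 (⋃ q ∈ V ×ˢ W, Prod.fst ⁻¹' E₁ q)
      ≤ ENNReal.ofReal (δ / 2) := by
    rw [← card_mul_ofReal_exp_neg_log hVW.card_pos hδ0]
    refine (measure_biUnion_finset_le _ _).trans (Finset.sum_le_card_nsmul _ _ _ fun q hq => ?_)
    obtain ⟨hq₁, hq₂⟩ := Finset.mem_product.mp hq
    rw [dataMeasure, measurePreserving_fst.measure_preimage
      (Set.toFinite _).measurableSet.nullMeasurableSet]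
    exact measure_empMean_dev (tupleWeight_nonneg hM) (sum_tupleWeight hM)
      (abs_transitionTerm_le hM hα hf (hVb _ hq₁) (hWb _ hq₂)) hn
      (log_four_mul_div_nonneg hVW.card_pos hδ0 hδ1)
  refine (measure_mono hsub).trans ((measure_union_le _ _).trans
    ((add_le_add hmeas₀ hmeas₁).trans_eq ?_))
  rw [← ENNReal.ofReal_add (by linarith) (by linarith), add_halves]

end UniformDeviation

section Suboptimality

variable {P : S → A → S → ℝ} {r : S → A → ℝ} {μ0 : S → ℝ} {γ : ℝ} {dD : S → A → ℝ}
  {f f' : ℝ → ℝ} {α : ℝ} {vst : S → ℝ} {wst : S → A → ℝ}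

lemma IsSaddle.sum_dD_pos (h : IsSaddle P r μ0 γ dD f α vst wst)
    (hM : MDPAssumptions P r μ0 γ dD) (s : S) : 0 < ∑ a, dD s a := by
  refine (Finset.sum_nonneg fun a _ => hM.dD_nonneg s a).lt_of_ne' fun h0 => ?_
  have hzero := (Finset.sum_eq_zero_iff_of_nonneg fun a _ => hM.dD_nonneg s a).mp h0
  have hflow := h.bellmanFlow s
  rw [Finset.sum_eq_zero fun a ha => by rw [dstar, hzero a ha, mul_zero]] at hflow
  have h1 := mul_pos (sub_pos.mpr hM.γ_lt_one) (hM.μ0_pos s)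
  have h2 : 0 ≤ γ * ∑ s', ∑ a', P s' a' s * dstar dD wst s' a' :=
    mul_nonneg hM.γ_nonneg (Finset.sum_nonneg fun s' _ => Finset.sum_nonneg fun a' _ =>
      mul_nonneg (hM.P_nonneg _ _ _) (mul_nonneg (h.1 _ _) (hM.dD_nonneg _ _)))
  linarith

/-- Regularization bias: a covered policy gains at most `α * Bf0` over the saddle-point flow. -/
lemma IsSaddle.Jret_sub_le (h : IsSaddle P r μ0 γ dD f α vst wst)
    (hM : MDPAssumptions P r μ0 γ dD) (hα : 0 < α) {Bw0 Bf0 : ℝ} {π0 : S → A → ℝ}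
    (hπ0 : IsPolicy π0) (hcov : ∀ s a, occ P μ0 γ π0 s a ≤ Bw0 * dD s a)
    (hBf0 : ∀ x, 0 ≤ x → x ≤ Bw0 → |f x| ≤ Bf0) (hf : ∀ x, 0 ≤ f x) :
    Jret P r μ0 γ π0 - ∑ s, ∑ a, dstar dD wst s a * r s a ≤ α * Bf0 := by
  set w0 : S → A → ℝ := fun s a => occ P μ0 γ π0 s a / dD s a with hw0
  have hw0nn : ∀ s a, 0 ≤ w0 s a := fun s a => div_nonneg (occ_nonneg hM hπ0 s a) (hM.dD_nonneg s a)
  have hds : dstar dD w0 = occ P μ0 γ π0 := by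
    ext s a
    obtain h0 | hpos := (hM.dD_nonneg s a).eq_or_lt
    · have h1 := hcov s a
      rw [← h0, mul_zero] at h1
      rw [dstar, ← h0, mul_zero, le_antisymm h1 (occ_nonneg hM hπ0 s a)]
    · rw [dstar, hw0, div_mul_cancel₀ _ hpos.ne']
  have hflow : BellmanFlow P μ0 γ (dstar dD w0) := hds ▸ bellmanFlow_occ hM hπ0
  have hmax := h.2.2 w0 hw0nn
  rw [Lag_eq_of_bellmanFlow hflow, Lag_eq_of_bellmanFlow h.bellmanFlow, hds] at hmax
  have hfw0 : ∑ s, ∑ a, dD s a * f (w0 s a) ≤ Bf0 := by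
    calc ∑ s, ∑ a, dD s a * f (w0 s a) ≤ ∑ s, ∑ a, dD s a * Bf0 :=
          Finset.sum_le_sum fun s _ => Finset.sum_le_sum fun a _ => by
            obtain h0 | hpos := (hM.dD_nonneg s a).eq_or_lt
            · simp [← h0]
            · exact mul_le_mul_of_nonneg_left ((le_abs_self _).trans
                (hBf0 _ (hw0nn s a) ((div_le_iff₀ hpos).mpr (hcov s a)))) hpos.le
      _ = Bf0 := by simp only [← Finset.sum_mul, hM.dD_sum, one_mul]
  have hfw : 0 ≤ ∑ s, ∑ a, dD s a * f (wst s a) := Finset.sum_nonneg fun s _ =>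
    Finset.sum_nonneg fun a _ => mul_nonneg (hM.dD_nonneg s a) (hf _)
  have h1 := mul_le_mul_of_nonneg_left hfw0 hα.le
  have h2 := mul_nonneg hα.le hfw
  rw [Jret]
  linarith

lemma sum_mul_abs_le_l2nrm (hM : MDPAssumptions P r μ0 γ dD) (g : S → A → ℝ) :
    ∑ s, ∑ a, dD s a * |g s a| ≤ l2nrm dD g := by
  refine Real.le_sqrt_of_sq_le ?_
  set m := ∑ s, ∑ a, dD s a * |g s a| with hm
  have hvar : 0 ≤ ∑ s, ∑ a, dD s a * (|g s a| - m) ^ 2 := Finset.sum_nonneg fun s _ =>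
    Finset.sum_nonneg fun a _ => mul_nonneg (hM.dD_nonneg s a) (sq_nonneg _)
  have hexpand : ∑ s, ∑ a, dD s a * (|g s a| - m) ^ 2
      = ∑ s, ∑ a, dD s a * g s a ^ 2 - 2 * m * m + m ^ 2 * ∑ s, ∑ a, dD s a := by
    conv_rhs => rw [show 2 * m * m = 2 * m * ∑ s, ∑ a, dD s a * |g s a| from rfl]
    simp only [Finset.mul_sum, ← Finset.sum_sub_distrib, ← Finset.sum_add_distrib]
    refine Finset.sum_congr rfl fun s _ => Finset.sum_congr rfl fun a _ => ?_
    rw [← sq_abs (g s a)]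
    ring
  rw [hM.dD_sum] at hexpand
  linarith

/-- The policy extracted from `w` loses at most `2 / (1 - γ) * ‖w - wst‖₂` against the
saddle-point flow. -/
lemma IsSaddle.sum_reward_sub_Jret_extractPolicy_le [Nonempty S] [Nonempty A]
    (h : IsSaddle P r μ0 γ dD f α vst wst) (hM : MDPAssumptions P r μ0 γ dD)
    {w : S → A → ℝ} (hw : ∀ s a, 0 ≤ w s a) :
    ∑ s, ∑ a, dstar dD wst s a * r s a - Jret P r μ0 γ (extractPolicy (behPolicy dD) w)
      ≤ 2 / (1 - γ) * l2nrm dD (fun s a => w s a - wst s a) := by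
  have hst : ∀ s a, 0 ≤ dstar dD wst s a := fun s a => mul_nonneg (h.1 s a) (hM.dD_nonneg s a)
  have hdw : ∀ s a, 0 ≤ dstar dD w s a := fun s a => mul_nonneg (hw s a) (hM.dD_nonneg s a)
  have hγ : 0 < 1 - γ := sub_pos.mpr hM.γ_lt_one
  rw [extractPolicy_behPolicy (h.sum_dD_pos hM)]
  refine (h.bellmanFlow.sum_reward_sub_Jret_le hM (isPolicy_normPolicy hdw)).trans ?_
  calc 1 / (1 - γ) * ∑ s, ∑ a,
        |dstar dD wst s a - (∑ a', dstar dD wst s a') * normPolicy (dstar dD w) s a|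
      ≤ 1 / (1 - γ) * ∑ s, 2 * ∑ a, |dstar dD wst s a - dstar dD w s a| := by
        gcongr with s _
        exact sum_abs_sub_normPolicy_le hst hdw s
    _ = 2 / (1 - γ) * ∑ s, ∑ a, dD s a * |w s a - wst s a| := by
        rw [← Finset.mul_sum, ← mul_assoc, one_div_mul_eq_div]
        congr 1
        refine Finset.sum_congr rfl fun s _ => Finset.sum_congr rfl fun a _ => ?_
        rw [dstar, dstar, ← sub_mul, abs_mul, abs_of_nonneg (hM.dD_nonneg s a), abs_sub_comm,
          mul_comm]
    _ ≤ _ := by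
        gcongr
        exact sum_mul_abs_le_l2nrm hM fun s a => w s a - wst s a

/-- An approximate max-min point `what` of a Lagrangian `Lhat` that is uniformly `ε`-close to the
population Lagrangian nearly attains the saddle value. -/
lemma IsSaddle.Lag_gap_le (h : IsSaddle P r μ0 γ dD f α vst wst)
    (hM : MDPAssumptions P r μ0 γ dD) (hα : 0 < α) {Bw Bf' Bv ε εow : ℝ} (hBw : 0 ≤ Bw)
    (hf : ∀ x, HasDerivAt f (f' x) x) (hf' : ∀ x, 0 ≤ x → x ≤ Bw → |f' x| ≤ Bf')
    (hA1 : ∀ s a, dstar dD wst s a ≤ Bw * dD s a)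
    {V : Finset (S → ℝ)} {W : Finset (S → A → ℝ)} (hV : V.Nonempty) (hW : W.Nonempty)
    (hVb : ∀ v ∈ V, ∀ s, |v s| ≤ Bv) (hWb : ∀ w ∈ W, ∀ s a, 0 ≤ w s a ∧ w s a ≤ Bw)
    {Lhat : (S → ℝ) → (S → A → ℝ) → ℝ}
    (hdev : ∀ v ∈ V, ∀ w ∈ W, |Lhat v w - Lag P r μ0 γ dD f α v w| ≤ ε)
    {what : S → A → ℝ} (hwhat : what ∈ W)
    (hopt : W.sup' hW (fun w => V.inf' hV fun v => Lhat v w)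
      - V.inf' hV (fun v => Lhat v what) ≤ εow) :
    Lag P r μ0 γ dD f α vst wst - Lag P r μ0 γ dD f α vst what
      ≤ 2 * ε + (εow +
        ((Bw + 1) *
            (V.inf' hV fun v => (∑ s, μ0 s * |v s - vst s|)
              + (∑ s, (∑ a, dD s a) * |v s - vst s|)
              + ∑ s, (∑ s', ∑ a', dD s' a' * P s' a' s) * |v s - vst s|)
          + ((1 + γ) * Bv + 1 + α * Bf') *
            (W.inf' hW fun w => ∑ s, ∑ a, dD s a * |w s a - wst s a|))) := by
  obtain ⟨vt, hvt, hvt_eq⟩ := V.exists_mem_eq_inf' hV fun v => (∑ s, μ0 s * |v s - vst s|)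
    + (∑ s, (∑ a, dD s a) * |v s - vst s|)
    + ∑ s, (∑ s', ∑ a', dD s' a' * P s' a' s) * |v s - vst s|
  obtain ⟨wt, hwt, hwt_eq⟩ := W.exists_mem_eq_inf' hW fun w =>
    ∑ s, ∑ a, dD s a * |w s a - wst s a|
  obtain ⟨vm, hvm, hvm_eq⟩ := V.exists_mem_eq_inf' hV fun v => Lhat v wt
  rw [hvt_eq, hwt_eq]
  have h1 := Lag_sub_left_le (f := f) (α := α) hM hBw (hWb what hwhat) vt vst
  have h2 := (abs_le.mp (hdev vt hvt what hwhat)).2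
  have h3 := V.inf'_le (fun v => Lhat v what) hvt
  have h4 := W.le_sup' (fun w => V.inf' hV fun v => Lhat v w) hwt
  have h5 := (abs_le.mp (hdev vm hvm wt hwt)).1
  have h6 := Lag_sub_right_le (μ0 := μ0) (v := vm) hM hα hf hf' (abs_eV_le hM (hVb vm hvm))
    (fun s a _ => hWb wt hwt s a)
    (fun s a hpos => ⟨h.1 s a, le_of_mul_le_mul_right (hA1 s a) hpos⟩)
  have h7 := h.2.1 vm
  linarith

lemma sqrt_add_le_sqrt_add_sqrt (x y : ℝ) : √(x + y) ≤ √x + √y := by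
  obtain hx | hx := lt_or_ge x 0
  · rw [Real.sqrt_eq_zero_of_nonpos hx.le, zero_add]
    exact Real.sqrt_le_sqrt (by linarith)
  obtain hy | hy := lt_or_ge y 0
  · rw [Real.sqrt_eq_zero_of_nonpos hy.le, add_zero]
    exact Real.sqrt_le_sqrt (by linarith)
  rw [Real.sqrt_le_iff]
  refine ⟨by positivity, ?_⟩
  have := mul_nonneg (Real.sqrt_nonneg x) (Real.sqrt_nonneg y)
  rw [add_sq, Real.sq_sqrt hx, Real.sq_sqrt hy]
  linarith

end Suboptimality

/-- Corollary 2: error-robust version of Corollary 1. -/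
theorem stmt4
    {S A : Type*} [Fintype S] [Fintype A] [Nonempty S] [Nonempty A]
    [MeasurableSpace S] [MeasurableSpace A]
    [MeasurableSingletonClass S] [MeasurableSingletonClass A]
    (P : S → A → S → ℝ) (r : S → A → ℝ) (μ0 : S → ℝ) (γ : ℝ) (dD : S → A → ℝ)
    (hMDP : MDPAssumptions P r μ0 γ dD)
    (f f' : ℝ → ℝ) (αun δ : ℝ) (hα : 0 < αun) (hδ0 : 0 < δ) (hδ1 : δ < 1)
    (Mf Bw0 Bf0 Bw Bf' Bf Bv Be : ℝ)
    -- π*₀ is an optimal policy whose occupancy d*₀ is covered by the data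
    (π0 : S → A → ℝ) (hπ0 : IsPolicy π0)
    (hopt : ∀ π : S → A → ℝ, IsPolicy π → Jret P r μ0 γ π ≤ Jret P r μ0 γ π0)
    (hcov0 : ∀ s a, occ P μ0 γ π0 s a ≤ Bw0 * dD s a)
    (hBf0 : ∀ x, 0 ≤ x → x ≤ Bw0 → |f x| ≤ Bf0)
    -- (A5) etc. at α = α_un
    (hreg : RegAssumptions f f' Mf Bw Bf' Bf) (hfnn : ∀ x, 0 ≤ f x)
    (hBv : Bv = (αun * Bf' + 1) / (1 - γ)) (hBe : Be = (1 + γ) * Bv + 1)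
    (vst : S → ℝ) (wst : S → A → ℝ)
    (hsad : IsSaddle P r μ0 γ dD f αun vst wst)
    (V : Finset (S → ℝ)) (W : Finset (S → A → ℝ))
    (hV : V.Nonempty) (hW : W.Nonempty)
    (hA1 : ∀ s a, dstar dD wst s a ≤ Bw * dD s a)
    (hA4 : ∀ w ∈ W, ∀ s a, 0 ≤ w s a ∧ w s a ≤ Bw)
    (hA6 : ∀ v ∈ V, ∀ s, |v s| ≤ Bv)
    (εov εow : ℝ)
    (n n0 : ℕ) (hn : 0 < n) (hn0 : 0 < n0)
    (vhat : (Fin n → (S × A) × S) × (Fin n0 → S) → S → ℝ)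
    (what : (Fin n → (S × A) × S) × (Fin n0 → S) → S → A → ℝ)
    (halg : ∀ ω, vhat ω ∈ V ∧ what ω ∈ W ∧
      empLag r γ f αun ω.1 ω.2 (vhat ω) (what ω)
          - V.inf' hV (fun v => empLag r γ f αun ω.1 ω.2 v (what ω)) ≤ εov ∧
      W.sup' hW (fun w => V.inf' hV fun v => empLag r γ f αun ω.1 ω.2 v w)
          - V.inf' hV (fun v => empLag r γ f αun ω.1 ω.2 v (what ω)) ≤ εow) :
    1 - ENNReal.ofReal δ ≤
      dataMeasure P dD μ0 n n0 {ω |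
        Jret P r μ0 γ π0 - Jret P r μ0 γ (extractPolicy (behPolicy dD) (what ω))
          ≤ (4 / (1 - γ)) *
              Real.sqrt (epsStat γ αun Bv Bf Bw Be δ V.card W.card n n0 / (αun * Mf))
            + (αun * Bf0 + (2 / (1 - γ)) *
              Real.sqrt (2 * ((εov + εow) +
                ((Bw + 1) *
                  (V.inf' hV fun v => (∑ s : S, μ0 s * |v s - vst s|)
                    + (∑ s : S, (∑ a : A, dD s a) * |v s - vst s|)
                    + ∑ s : S, (∑ s' : S, ∑ a' : A, dD s' a' * P s' a' s) * |v s - vst s|)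
                  + (Be + αun * Bf') *
                    (W.inf' hW fun w => ∑ s : S, ∑ a : A, dD s a * |w s a - wst s a|)))
                / (αun * Mf))) } := by
  have hBw : 0 ≤ Bw := by
    obtain ⟨w, hw⟩ := hW
    obtain ⟨s⟩ := ‹Nonempty S›
    obtain ⟨a⟩ := ‹Nonempty A›
    exact (hA4 w hw s a).1.trans (hA4 w hw s a).2
  have hαM : 0 < αun * Mf := mul_pos hα hreg.Mf_pos
  have hγ : 0 < 1 - γ := sub_pos.mpr hMDP.γ_lt_one
  subst hBe
  have hbad := dataMeasure_exists_deviation_le hMDP hα hδ0 hδ1 hreg.f_bdd hV hW hA6 hA4 hn hn0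
  have := isProbabilityMeasure_discMeasure (tupleWeight_nonneg hMDP) (sum_tupleWeight hMDP)
  have := isProbabilityMeasure_discMeasure (fun s => (hMDP.μ0_pos s).le) hMDP.μ0_sum
  have hprob : dataMeasure P dD μ0 n n0 Set.univ = 1 := by
    rw [dataMeasure]
    exact measure_univ
  rw [tsub_le_iff_right, ← hprob]
  refine le_trans (measure_mono fun ω _ => ?_)
    ((measure_union_le _ _).trans (add_le_add_right hbad _))
  rw [Set.mem_union, or_iff_not_imp_right]
  intro hω
  have hdev : ∀ v ∈ V, ∀ w ∈ W, |empLag r γ f αun ω.1 ω.2 v w - Lag P r μ0 γ dD f αun v w|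
      ≤ epsStat γ αun Bv Bf Bw ((1 + γ) * Bv + 1) δ V.card W.card n n0 :=
    fun v hv w hw => not_lt.mp fun hlt => hω ⟨v, hv, w, hw, hlt⟩
  obtain ⟨hvhat, hwhat, hov, how⟩ := halg ω
  have hov0 : 0 ≤ εov := (sub_nonneg.mpr
    (V.inf'_le (fun v => empLag r γ f αun ω.1 ω.2 v (what ω)) hvhat)).trans hov
  have hgap := hsad.Lag_gap_le hMDP hα hBw hreg.deriv hreg.f'_bdd hA1 hV hW hA6 hA4 hdev hwhat how
  have hgrowth := hsad.quadratic_growth hMDP.dD_nonneg hα hreg.strong hreg.Mf_pos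
    fun s a => (hA4 _ hwhat s a).1
  have hbias := hsad.Jret_sub_le hMDP hα hπ0 hcov0 hBf0 hfnn
  have hloss := hsad.sum_reward_sub_Jret_extractPolicy_le hMDP fun s a => (hA4 _ hwhat s a).1
  rw [Set.mem_ofPred_eq]
  set ε := epsStat γ αun Bv Bf Bw ((1 + γ) * Bv + 1) δ V.card W.card n n0
  set app := (Bw + 1) *
      (V.inf' hV fun v => (∑ s : S, μ0 s * |v s - vst s|)
        + (∑ s : S, (∑ a : A, dD s a) * |v s - vst s|)
        + ∑ s : S, (∑ s' : S, ∑ a' : A, dD s' a' * P s' a' s) * |v s - vst s|)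
      + ((1 + γ) * Bv + 1 + αun * Bf') *
        (W.inf' hW fun w => ∑ s : S, ∑ a : A, dD s a * |w s a - wst s a|)
  have hl2 : l2nrm dD (fun s a => what ω s a - wst s a)
      ≤ 2 * √(ε / (αun * Mf)) + √(2 * ((εov + εow) + app) / (αun * Mf)) := by
    calc l2nrm dD (fun s a => what ω s a - wst s a)
        ≤ √(2 ^ 2 * (ε / (αun * Mf)) + 2 * ((εov + εow) + app) / (αun * Mf)) := by
          refine Real.sqrt_le_sqrt ?_
          rw [← mul_div_assoc, ← add_div, le_div_iff₀ hαM]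
          linarith
      _ ≤ √(2 ^ 2 * (ε / (αun * Mf))) + √(2 * ((εov + εow) + app) / (αun * Mf)) :=
          sqrt_add_le_sqrt_add_sqrt _ _
      _ = _ := by rw [Real.sqrt_mul (by norm_num), Real.sqrt_sq (by norm_num)]
  have hscaled := mul_le_mul_of_nonneg_left hl2 (div_pos two_pos hγ).le
  have hfour : 2 / (1 - γ) * (2 * √(ε / (αun * Mf))) = 4 / (1 - γ) * √(ε / (αun * Mf)) := by ring
  rw [mul_add, hfour] at hscaled
  linarith
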